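/- arXiv:2203.00671 — 2 statements merged into one kernel-verified Lean document; each statement's English description precedes it below -/
import Mathlib

section
/- (Capacity rounding preserves near-optimality.) Consider a min-cost circulation instance on G = (V,E) with m = |E| ≥ 2, integral costs c ∈ ℤ^E with |c_e| ≤ m^{10} for all e, and integral capacities u ∈ ℤ^E with u_e ≥ 1, and let F* := min{c^⊤f : f a circulation with 0 ≤ f ≤ u}. Let B > 0 be a real with F* ≤ −B and F* ≥ −m^{12}·B. Let q := ⌈B/m^{20}⌉ and M := ⌈B·m^{20}⌉, and define rounded capacities u^B ∈ ℤ^E by u^B_e := M if u_e > B·m^{20}, and u^B_e := q·⌊u_e/q⌋ otherwise. Then every minimizer f^B of c^⊤f over circulations f with 0 ≤ f ≤ u^B satisfies 0 ≤ f^B ≤ u (so f^B is feasible for the original instance) and F* ≤ c^⊤f^B ≤ (1 − 2·m^{−8})·F*. -/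
open Finset
open scoped Classical

noncomputable section

/-- `f` is a (real-valued) circulation respecting the capacities `cap`: `0 ≤ f ≤ cap`
and flow conservation at every vertex. -/
def IsCirc {V E : Type} [Fintype E] [DecidableEq V] (tail head : E → V)
    (cap : E → ℤ) (f : E → ℝ) : Prop :=
  (∀ e, 0 ≤ f e ∧ f e ≤ (cap e : ℝ)) ∧
    ∀ v, (∑ e ∈ univ.filter (fun e => tail e = v), f e)
      = ∑ e ∈ univ.filter (fun e => head e = v), f e

/-- The cost `cᵀ f` of a flow (integral costs, real flow). -/
def costZ {E : Type} [Fintype E] (c : E → ℤ) (f : E → ℝ) : ℝ := ∑ e, (c e : ℝ) * f e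

/-!
Decompose an optimal circulation `f` into weighted balanced edge sets (edge-disjoint unions of
cycles) and discard those of nonnegative cost. Each remaining one costs at most `-1` by
integrality, so the total weight, and hence the flow through any single edge, is at most `-F*`.
Capacities above `-F*` are therefore irrelevant. On every other edge the rounded capacity falls
short of `u e` by less than `q`. Fitting the flow into the new capacities by scaling down the edge
sets through each overfull edge removes total weight at most the sum of the shortfalls, and
removing one unit of weight costs at most `∑ |c e|`.
-/

section Conservation

variable {V E R : Type*} [Fintype E] [DecidableEq V]

/-- Flow conservation of `f` at every vertex, with no capacity or sign constraint. -/
def IsConserved [AddCommMonoid R] (tail head : E → V) (f : E → R) : Prop :=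
  ∀ v, ∑ e with tail e = v, f e = ∑ e with head e = v, f e

/-- An edge set with equal in- and out-degree at every vertex, i.e. an edge-disjoint union of
directed cycles. These play the role of the cycles in the flow decomposition theorem: allowing
unions avoids having to talk about walks. -/
def IsBalanced (tail head : E → V) (S : Finset E) : Prop :=
  ∀ v, #{e ∈ S | tail e = v} = #{e ∈ S | head e = v}

/-- The flow obtained by superposing the edge sets `S`, each carrying `w S` units. -/
def edgeLoad [AddCommMonoid R] (w : Finset E → R) (e : E) : R := ∑ S with e ∈ S, w S

lemma sum_smul_edgeLoad {A : Type*} [Semiring A] [AddCommMonoid R] [Module A R] (a : E → A)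
    (w : Finset E → R) : ∑ e, a e • edgeLoad w e = ∑ S, (∑ e ∈ S, a e) • w S := by
  simp only [edgeLoad, smul_sum, sum_smul]
  exact sum_comm' (by simp)

lemma sum_filter_edgeLoad [AddCommMonoid R] (p : E → Prop) [DecidablePred p]
    (w : Finset E → R) : ∑ e with p e, edgeLoad w e = ∑ S, #{e ∈ S | p e} • w S := by
  simpa only [ite_smul, one_smul, zero_smul, ← sum_filter, ← card_eq_sum_ones] using
    sum_smul_edgeLoad (fun e ↦ if p e then (1 : ℕ) else 0) w

lemma isConserved_edgeLoad [AddCommMonoid R] {tail head : E → V} {w : Finset E → R}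
    (hw : ∀ S, w S ≠ 0 → IsBalanced tail head S) : IsConserved tail head (edgeLoad w) := by
  intro v
  rw [sum_filter_edgeLoad, sum_filter_edgeLoad]
  refine sum_congr rfl fun S _ ↦ ?_
  by_cases hS : w S = 0
  · rw [hS, smul_zero, smul_zero]
  · rw [hw S hS v]

lemma IsConserved.sub [AddCommGroup R] {tail head : E → V} {f g : E → R}
    (hf : IsConserved tail head f) (hg : IsConserved tail head g) :
    IsConserved tail head (f - g) := fun v ↦ by
  simp only [Pi.sub_apply, sum_sub_distrib, hf v, hg v]

lemma edgeLoad_add [AddCommMonoid R] (w w' : Finset E → R) :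
    edgeLoad (w + w') = edgeLoad w + edgeLoad w' :=
  funext fun _ ↦ sum_add_distrib

lemma edgeLoad_single [AddCommMonoid R] (S : Finset E) (a : R) (e : E) :
    edgeLoad (Pi.single S a) e = if e ∈ S then a else 0 := by
  simp only [edgeLoad, sum_pi_single', mem_filter, mem_univ, true_and]

lemma edgeLoad_nonneg [AddCommMonoid R] [PartialOrder R] [IsOrderedAddMonoid R]
    {w : Finset E → R} (hw : 0 ≤ w) : 0 ≤ edgeLoad w :=
  fun _ ↦ sum_nonneg fun S _ ↦ hw S

lemma edgeLoad_mono [AddCommMonoid R] [PartialOrder R] [IsOrderedAddMonoid R] :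
    Monotone (edgeLoad : (Finset E → R) → E → R) :=
  fun _ _ h _ ↦ sum_le_sum fun S _ ↦ h S

lemma edgeLoad_le_sum [AddCommMonoid R] [PartialOrder R] [IsOrderedAddMonoid R]
    {w : Finset E → R} (hw : 0 ≤ w) (e : E) : edgeLoad w e ≤ ∑ S, w S :=
  sum_le_univ_sum_of_nonneg hw

end Conservation

section Decomposition

lemma nonempty_periodicPts {α : Type*} [Finite α] [Nonempty α] (f : α → α) :
    (Function.periodicPts f).Nonempty := by
  obtain ⟨x⟩ := ‹Nonempty α›
  obtain ⟨i, j, hij, h⟩ :=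
    Set.finite_univ.exists_lt_map_eq_of_forall_mem (f := fun k : ℕ ↦ f^[k] x) fun _ ↦ Set.mem_univ _
  refine ⟨f^[i] x, Function.mk_mem_periodicPts (Nat.sub_pos_of_lt hij) ?_⟩
  rw [Function.IsPeriodicPt, Function.IsFixedPt, ← Function.iterate_add_apply,
    Nat.sub_add_cancel hij.le]
  exact h.symm

variable {V E R : Type*} [DecidableEq V] {tail head : E → V}

-- A successor function restricts to a permutation of its periodic points, which are therefore
-- balanced.
lemma exists_isBalanced_of_forall_exists_tail_eq_head {P : Finset E} (hP : P.Nonempty)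
    (hsucc : ∀ e ∈ P, ∃ e' ∈ P, tail e' = head e) :
    ∃ S ⊆ P, S.Nonempty ∧ IsBalanced tail head S := by
  have : Nonempty P := hP.to_subtype
  have hsucc' (e : P) : ∃ e' : P, tail e' = head e := by
    obtain ⟨e', he', h⟩ := hsucc e e.2
    exact ⟨⟨e', he'⟩, h⟩
  choose next tail_next using hsucc'
  have hbij := Function.bijOn_periodicPts next
  let Q : Finset P := {e | e ∈ Function.periodicPts next}
  have hQ (e : P) : e ∈ Q ↔ e ∈ Function.periodicPts next := by
    simp only [Q, mem_filter, mem_univ, true_and]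
  refine ⟨Q.map (Function.Embedding.subtype _), map_subtype_subset Q, ?_, fun v ↦ ?_⟩
  · obtain ⟨e, he⟩ := nonempty_periodicPts next
    exact ⟨e, mem_map_of_mem _ ((hQ e).2 he)⟩
  rw [filter_map, filter_map, card_map, card_map]
  refine (card_nbij next ?_ ?_ ?_).symm
  · intro e he
    simp only [coe_filter, Set.mem_ofPred_eq, hQ] at he ⊢
    exact ⟨hbij.mapsTo he.1, (tail_next e).trans he.2⟩
  · exact hbij.injOn.mono fun e he ↦ (hQ e).1 (mem_filter.1 he).1
  · intro e' he'
    simp only [coe_filter, Set.mem_ofPred_eq, hQ] at he'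
    obtain ⟨e, he, rfl⟩ := hbij.surjOn he'.1
    refine ⟨e, ?_, rfl⟩
    simp only [coe_filter, Set.mem_ofPred_eq, hQ]
    exact ⟨he, (tail_next e).symm.trans he'.2⟩

variable [Fintype E] [AddCommGroup R] [LinearOrder R] [IsOrderedAddMonoid R] {f : E → R}

lemma IsConserved.exists_isBalanced_pos (hf : IsConserved tail head f) (hf0 : 0 ≤ f)
    (hpos : ∃ e, 0 < f e) :
    ∃ S : Finset E, S.Nonempty ∧ (∀ e ∈ S, 0 < f e) ∧ IsBalanced tail head S := by
  have hsucc (e : E) (he : 0 < f e) : ∃ e', 0 < f e' ∧ tail e' = head e := by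
    have inflow_pos : 0 < ∑ e' with head e' = head e, f e' :=
      sum_pos' (fun e' _ ↦ hf0 e') ⟨e, mem_filter.2 ⟨mem_univ e, rfl⟩, he⟩
    rw [← hf, ← sum_const_zero (s := univ.filter fun e' ↦ tail e' = head e)] at inflow_pos
    obtain ⟨e', he', hpos'⟩ := exists_lt_of_sum_lt inflow_pos
    exact ⟨e', hpos', (mem_filter.1 he').2⟩
  obtain ⟨S, hSP, hS, hbal⟩ := exists_isBalanced_of_forall_exists_tail_eq_head
    (P := univ.filter fun e ↦ 0 < f e) (tail := tail) (head := head)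
    (hpos.imp fun e he ↦ by simpa using he) (by simpa using hsucc)
  exact ⟨S, hS, fun e he ↦ (mem_filter.1 (hSP he)).2, hbal⟩

lemma IsConserved.exists_edgeLoad_eq (hf : IsConserved tail head f) (hf0 : 0 ≤ f) :
    ∃ w : Finset E → R, 0 ≤ w ∧ (∀ S, w S ≠ 0 → IsBalanced tail head S) ∧ edgeLoad w = f := by
  induction hn : #{e | 0 < f e} using Nat.strong_induction_on generalizing f with
  | _ n ih =>
  by_cases hpos : ∃ e, 0 < f e
  · obtain ⟨T, hT, hTpos, hTbal⟩ := hf.exists_isBalanced_pos hf0 hpos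
    obtain ⟨e₀, he₀, hmin⟩ := exists_min_image T f hT
    have hsingle (S : Finset E) (hS : (Pi.single T (f e₀) : Finset E → R) S ≠ 0) :
        IsBalanced tail head S := by
      rwa [show S = T from of_not_not fun h ↦ hS (Pi.single_eq_of_ne h _)]
    set t : E → R := edgeLoad (Pi.single T (f e₀)) with ht
    have ht0 : 0 ≤ t := edgeLoad_nonneg (Pi.single_nonneg.2 (hf0 e₀))
    have htf : t ≤ f := fun e ↦ by
      rw [ht, edgeLoad_single]
      split_ifs with he
      exacts [hmin e he, hf0 e]
    have hsupp : #{e | 0 < (f - t) e} < n := by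
      rw [← hn]
      refine card_lt_card <| (ssubset_iff_of_subset fun e he ↦ ?_).2 ⟨e₀, ?_, ?_⟩
      · simp only [mem_filter, mem_univ, true_and, Pi.sub_apply] at he ⊢
        exact he.trans_le (sub_le_self _ (ht0 e))
      · simpa only [mem_filter, mem_univ, true_and] using hTpos e₀ he₀
      · simp [ht, edgeLoad_single, he₀]
    obtain ⟨w, hw0, hwbal, hw⟩ :=
      ih _ hsupp (hf.sub (isConserved_edgeLoad hsingle)) (sub_nonneg.2 htf) rfl
    refine ⟨w + Pi.single T (f e₀), add_nonneg hw0 (Pi.single_nonneg.2 (hf0 e₀)), ?_, ?_⟩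
    · intro S hS
      by_cases hwS : w S = 0
      · exact hsingle S (by simpa [hwS] using hS)
      · exact hwbal S hwS
    · rw [edgeLoad_add, hw, ← ht, sub_add_cancel]
  · refine ⟨0, le_rfl, fun S hS ↦ absurd rfl hS, funext fun e ↦ ?_⟩
    rw [le_antisymm (not_lt.1 (not_exists.1 hpos e)) (hf0 e)]
    exact sum_const_zero

end Decomposition

section Trimming

lemma one_sub_prod_le_sum_one_sub {ι R : Type*} [CommRing R] [LinearOrder R]
    [IsStrictOrderedRing R] {a : ι → R} (ha0 : 0 ≤ a) (ha1 : a ≤ 1) (s : Finset ι) :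
    1 - ∏ i ∈ s, a i ≤ ∑ i ∈ s, (1 - a i) := by
  induction s using Finset.induction_on with
  | empty => simp
  | insert i s hi ih =>
    rw [prod_insert hi, sum_insert hi]
    have hprod : ∏ j ∈ s, a j ≤ 1 := prod_le_one (fun j _ ↦ ha0 j) fun j _ ↦ ha1 j
    have hcross : 0 ≤ (1 - a i) * (1 - ∏ j ∈ s, a j) :=
      mul_nonneg (sub_nonneg.2 (ha1 i)) (sub_nonneg.2 hprod)
    linarith

lemma exists_le_edgeLoad_le {E 𝕜 : Type*} [Fintype E] [Field 𝕜] [LinearOrder 𝕜]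
    [IsStrictOrderedRing 𝕜] {w : Finset E → 𝕜} (hw : 0 ≤ w) {cap : E → 𝕜} (hcap : 0 ≤ cap) :
    ∃ w', 0 ≤ w' ∧ w' ≤ w ∧ edgeLoad w' ≤ cap ∧
      ∑ S, (w S - w' S) ≤ ∑ e, (edgeLoad w e - cap e)⁺ := by
  set f := edgeLoad w
  have hf : 0 ≤ f := edgeLoad_nonneg hw
  -- The scaling factor is `0` on edges without flow, because `x / 0 = 0`.
  let a (e : E) : 𝕜 := min (f e) (cap e) / f e
  have ha0 : 0 ≤ a := fun e ↦ div_nonneg (le_min (hf e) (hcap e)) (hf e)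
  have ha1 : a ≤ 1 := fun e ↦ div_le_one_of_le₀ (min_le_left _ _) (hf e)
  have haf (e : E) : a e * f e = min (f e) (cap e) :=
    div_mul_cancel_of_imp fun h ↦ (min_eq_left (h.trans_le (hcap e))).trans h
  let w' (S : Finset E) : 𝕜 := (∏ e ∈ S, a e) * w S
  have hprod (S : Finset E) : ∏ e ∈ S, a e ≤ 1 := prod_le_one (fun e _ ↦ ha0 e) fun e _ ↦ ha1 e
  refine ⟨w', fun S ↦ mul_nonneg (prod_nonneg fun e _ ↦ ha0 e) (hw S),
    fun S ↦ mul_le_of_le_one_left (hw S) (hprod S), fun e ↦ ?_, ?_⟩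
  · have prod_le {S : Finset E} (he : e ∈ S) : ∏ e ∈ S, a e ≤ a e := by
      simpa using prod_le_prod_of_subset_of_le_one (singleton_subset_iff.2 he)
        (fun e _ ↦ ha0 e) fun e _ _ ↦ ha1 e
    calc edgeLoad w' e ≤ ∑ S with e ∈ S, a e * w S := sum_le_sum fun S hS ↦
          mul_le_mul_of_nonneg_right (prod_le (mem_filter.1 hS).2) (hw S)
      _ = a e * f e := (mul_sum _ _ _).symm
      _ ≤ cap e := (haf e).trans_le (min_le_right _ _)
  · calc ∑ S, (w S - w' S) = ∑ S, (1 - ∏ e ∈ S, a e) * w S :=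
          sum_congr rfl fun S _ ↦ (one_sub_mul _ _).symm
      _ ≤ ∑ S, (∑ e ∈ S, (1 - a e)) • w S := sum_le_sum fun S _ ↦
          mul_le_mul_of_nonneg_right (one_sub_prod_le_sum_one_sub ha0 ha1 S) (hw S)
      _ = ∑ e, (1 - a e) • f e := (sum_smul_edgeLoad _ _).symm
      _ = ∑ e, (f e - cap e)⁺ := sum_congr rfl fun e _ ↦ by
          rw [smul_eq_mul, one_sub_mul, haf, inf_eq_sub_posPart_sub, sub_sub_cancel]

end Trimming

section Cost

variable {V E : Type} [Fintype E] [DecidableEq V] {tail head : E → V} {c : E → ℤ}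

lemma costZ_edgeLoad (c : E → ℤ) (w : Finset E → ℝ) :
    costZ c (edgeLoad w) = ∑ S, (∑ e ∈ S, c e) • w S := by
  simp only [costZ, ← zsmul_eq_mul, sum_smul_edgeLoad]

lemma sum_le_neg_costZ_edgeLoad {w : Finset E → ℝ} (hw : 0 ≤ w)
    (hneg : ∀ S, w S ≠ 0 → ∑ e ∈ S, c e < 0) : ∑ S, w S ≤ -costZ c (edgeLoad w) := by
  rw [costZ_edgeLoad, ← sum_neg_distrib]
  refine sum_le_sum fun S _ ↦ ?_
  rw [← neg_smul, zsmul_eq_mul]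
  by_cases hS : w S = 0
  · rw [hS, mul_zero]
  · have : 1 ≤ -∑ e ∈ S, c e := by linarith [Int.add_one_le_iff.2 (hneg S hS)]
    exact le_mul_of_one_le_left (hw S) (by exact_mod_cast this)

lemma costZ_edgeLoad_le_add {w w' : Finset E → ℝ} (h : w' ≤ w) :
    costZ c (edgeLoad w') ≤ costZ c (edgeLoad w) + (∑ e, |c e| : ℤ) * ∑ S, (w S - w' S) := by
  rw [costZ_edgeLoad, costZ_edgeLoad, mul_sum, ← sum_add_distrib]
  refine sum_le_sum fun S _ ↦ ?_
  have hcost : -(∑ e ∈ S, c e) ≤ ∑ e, |c e| :=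
    (neg_le_abs _).trans <| (abs_sum_le_sum_abs _ _).trans <|
      sum_le_univ_sum_of_nonneg fun e ↦ abs_nonneg (c e)
  have hcost' : -((∑ e ∈ S, c e : ℤ) : ℝ) ≤ (∑ e, |c e| : ℤ) := by exact_mod_cast hcost
  have := mul_le_mul_of_nonneg_right hcost' (sub_nonneg.2 (h S))
  rw [zsmul_eq_mul, zsmul_eq_mul]
  linarith

lemma IsConserved.exists_edgeLoad_le_of_neg_cost {f : E → ℝ} (hf : IsConserved tail head f)
    (hf0 : 0 ≤ f) (c : E → ℤ) :
    ∃ w : Finset E → ℝ, 0 ≤ w ∧ (∀ S, w S ≠ 0 → IsBalanced tail head S ∧ ∑ e ∈ S, c e < 0) ∧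
      edgeLoad w ≤ f ∧ costZ c (edgeLoad w) ≤ costZ c f := by
  obtain ⟨w, hw0, hwbal, rfl⟩ := hf.exists_edgeLoad_eq hf0
  let w' (S : Finset E) : ℝ := if ∑ e ∈ S, c e < 0 then w S else 0
  refine ⟨w', fun S ↦ ite_nonneg (hw0 S) le_rfl, fun S hS ↦ ?_, edgeLoad_mono fun S ↦ ?_, ?_⟩
  · obtain ⟨hneg, hwS⟩ := ite_ne_right_iff.1 hS
    exact ⟨hwbal S hwS, hneg⟩
  · exact (ite_le_sup _ _ _).trans (sup_le le_rfl (hw0 S))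
  · rw [costZ_edgeLoad, costZ_edgeLoad]
    refine sum_le_sum fun S _ ↦ ?_
    by_cases hneg : ∑ e ∈ S, c e < 0
    · simp only [w', if_pos hneg, le_rfl]
    · simpa only [w', if_neg hneg, smul_zero] using zsmul_nonneg (hw0 S) (not_lt.1 hneg)

lemma exists_isCirc_costZ_le_add_of_isMin {u u' : E → ℤ} {f : E → ℝ} (hf : IsCirc tail head u f)
    (hmin : ∀ g, IsCirc tail head u g → costZ c f ≤ costZ c g) (hu' : 0 ≤ u') :
    ∃ g, IsCirc tail head u' g ∧ costZ c g ≤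
      costZ c f + (∑ e, |c e| : ℤ) * ∑ e, (min (u e : ℝ) (-costZ c f) - u' e)⁺ := by
  obtain ⟨w, hw0, hw, hwf, hcost⟩ :=
    IsConserved.exists_edgeLoad_le_of_neg_cost hf.2 (fun e ↦ (hf.1 e).1) c
  have hwu (e : E) : edgeLoad w e ≤ u e := (hwf e).trans (hf.1 e).2
  have hmin' : costZ c f ≤ costZ c (edgeLoad w) :=
    hmin _ ⟨fun e ↦ ⟨edgeLoad_nonneg hw0 e, hwu e⟩, isConserved_edgeLoad fun S hS ↦ (hw S hS).1⟩
  have hload (e : E) : edgeLoad w e ≤ min (u e : ℝ) (-costZ c f) :=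
    le_min (hwu e) <| calc
      edgeLoad w e ≤ ∑ S, w S := edgeLoad_le_sum hw0 e
      _ ≤ -costZ c (edgeLoad w) := sum_le_neg_costZ_edgeLoad hw0 fun S hS ↦ (hw S hS).2
      _ ≤ -costZ c f := neg_le_neg hmin'
  obtain ⟨w', hw'0, hw'w, hw'u, hloss⟩ :=
    exists_le_edgeLoad_le hw0 (cap := fun e ↦ (u' e : ℝ)) fun e ↦ Int.cast_nonneg (hu' e)
  have hbal (S : Finset E) (hS : w' S ≠ 0) : IsBalanced tail head S :=
    (hw S fun h ↦ hS (le_antisymm (h ▸ hw'w S) (hw'0 S))).1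
  refine ⟨edgeLoad w', ⟨fun e ↦ ⟨edgeLoad_nonneg hw'0 e, hw'u e⟩, isConserved_edgeLoad hbal⟩, ?_⟩
  refine (costZ_edgeLoad_le_add hw'w).trans (add_le_add hcost ?_)
  refine mul_le_mul_of_nonneg_left (hloss.trans (sum_le_sum fun e _ ↦ ?_))
    (Int.cast_nonneg (sum_nonneg fun e _ ↦ abs_nonneg (c e)))
  exact posPart_mono (sub_le_sub_right (hload e) _)

end Cost

section Rounding

/-- The rounded capacity `u^B` of an edge of capacity `n`: capacities above the threshold `T`
become `⌈T⌉`, all others are rounded down to a multiple of `q`. -/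
def roundCap (q : ℤ) (T : ℝ) (n : ℤ) : ℤ := if T < n then ⌈T⌉ else q * (n / q)

variable {q n : ℤ} {T : ℝ}

lemma roundCap_le (hq : 0 < q) : roundCap q T n ≤ n := by
  unfold roundCap
  split_ifs with h
  exacts [Int.ceil_le.2 h.le, Int.mul_ediv_self_le hq.ne']

lemma roundCap_nonneg (hq : 0 < q) (hT : 0 ≤ T) (hn : 0 ≤ n) : 0 ≤ roundCap q T n := by
  unfold roundCap
  split_ifs
  exacts [Int.ceil_nonneg hT, mul_nonneg hq.le (Int.ediv_nonneg hn hq.le)]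

lemma posPart_min_sub_roundCap_le (hq : 0 < q) {x : ℝ} (hx : x ≤ T) :
    (min (n : ℝ) x - roundCap q T n)⁺ ≤ q - 1 := by
  have hq1 : (1 : ℝ) ≤ q := by exact_mod_cast hq
  refine sup_le ?_ (sub_nonneg.2 hq1)
  unfold roundCap
  split_ifs with h
  · linarith [min_le_right (n : ℝ) x, Int.le_ceil T]
  · have hmod : n - q * (n / q) ≤ q - 1 := by
      linarith [Int.emod_lt_of_pos n hq, Int.mul_ediv_add_emod n q]
    have hmod' : (n : ℝ) - (q * (n / q) : ℤ) ≤ q - 1 := by exact_mod_cast hmod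
    linarith [min_le_left (n : ℝ) x]

end Rounding

lemma add_mul_ceil_sub_one_le {m F B C : ℝ} (hm : 0 < m) (hB : 0 < B) (hFB : F ≤ -B)
    (hC : C ≤ m * m ^ 10) :
    F + C * (m * (⌈B / m ^ 20⌉ - 1)) ≤ (1 - 2 / m ^ 8) * F := by
  have hq : (1 : ℝ) ≤ ⌈B / m ^ 20⌉ := by
    exact_mod_cast Int.one_le_ceil_iff.2 (show 0 < B / m ^ 20 by positivity)
  have hqB : (⌈B / m ^ 20⌉ : ℝ) - 1 ≤ B / m ^ 20 := by linarith [Int.ceil_lt_add_one (B / m ^ 20)]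
  have hloss : C * (m * (⌈B / m ^ 20⌉ - 1)) ≤ -F / m ^ 8 := calc
    _ ≤ m * m ^ 10 * (m * (B / m ^ 20)) := by gcongr
    _ = B / m ^ 8 := by field_simp
    _ ≤ -F / m ^ 8 := by gcongr; linarith
  have hslack : 0 ≤ -F / m ^ 8 := div_nonneg (by linarith) (by positivity)
  calc F + C * (m * (⌈B / m ^ 20⌉ - 1)) ≤ F + 2 * (-F / m ^ 8) := by linarith
    _ = (1 - 2 / m ^ 8) * F := by ring

theorem stmt16_general {V E : Type} [Fintype E] [DecidableEq V] {tail head : E → V}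
    {c u : E → ℤ} {f : E → ℝ} (hf : IsCirc tail head u f)
    (hmin : ∀ g, IsCirc tail head u g → costZ c f ≤ costZ c g)
    {q : ℤ} (hq : 0 < q) {T : ℝ} (hT : -costZ c f ≤ T)
    {fB : E → ℝ} (hfB : IsCirc tail head (fun e ↦ roundCap q T (u e)) fB)
    (hopt : ∀ g, IsCirc tail head (fun e ↦ roundCap q T (u e)) g → costZ c fB ≤ costZ c g) :
    IsCirc tail head u fB ∧ costZ c f ≤ costZ c fB ∧
      costZ c fB ≤ costZ c f + (∑ e, |c e| : ℤ) * (Fintype.card E * (q - 1)) := by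
  have hu (e : E) : 0 ≤ u e := by exact_mod_cast (hf.1 e).1.trans (hf.1 e).2
  have hcost : costZ c f ≤ 0 := by
    simpa [costZ] using hmin 0 ⟨fun e ↦ ⟨le_rfl, Int.cast_nonneg (hu e)⟩, fun v ↦ by simp⟩
  have hfeas : IsCirc tail head u fB :=
    ⟨fun e ↦ ⟨(hfB.1 e).1, (hfB.1 e).2.trans (Int.cast_le.2 (roundCap_le hq))⟩, hfB.2⟩
  obtain ⟨g, hg, hgcost⟩ := exists_isCirc_costZ_le_add_of_isMin hf hmin
    fun e ↦ roundCap_nonneg hq ((neg_nonneg.2 hcost).trans hT) (hu e)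
  refine ⟨hfeas, hmin fB hfeas, (hopt g hg).trans (hgcost.trans ?_)⟩
  have hshort : ∑ e, (min (u e : ℝ) (-costZ c f) - roundCap q T (u e))⁺ ≤
      Fintype.card E * (q - 1) :=
    (sum_le_card_nsmul _ _ _ fun e _ ↦ posPart_min_sub_roundCap_le hq hT).trans_eq
      (nsmul_eq_mul _ _)
  gcongr

/-- capacity rounding preserves near-optimality: rounding the
capacities down to multiples of `q = ⌈B/m²⁰⌉` (capping them at `M = ⌈B·m²⁰⌉`) changes the
optimal circulation value by at most a `(1 - 2 m⁻⁸)` factor, where `-B` is an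
`m¹²`-approximation of the (negative) optimal value `F*`. -/
theorem stmt16
    {V E : Type} [Fintype V] [Fintype E] [DecidableEq V]
    (tail head : E → V)
    (m : ℕ) (hmcard : m = Fintype.card E) (hm : 2 ≤ m)
    (c u : E → ℤ) (hc : ∀ e, |c e| ≤ (m : ℤ) ^ 10) (hu : ∀ e, 1 ≤ u e)
    (Fstar : ℝ)
    (hex : ∃ f, IsCirc tail head u f ∧ costZ c f = Fstar)
    (hmin : ∀ f, IsCirc tail head u f → Fstar ≤ costZ c f)
    (B : ℝ) (hB : 0 < B) (hFB : Fstar ≤ -B) (hFB' : -(m : ℝ) ^ 12 * B ≤ Fstar) :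
    let q : ℤ := ⌈B / (m : ℝ) ^ 20⌉
    let M : ℤ := ⌈B * (m : ℝ) ^ 20⌉
    let uB : E → ℤ := fun e => if B * (m : ℝ) ^ 20 < (u e : ℝ) then M else q * (u e / q)
    ∀ fB : E → ℝ, IsCirc tail head uB fB →
      (∀ g, IsCirc tail head uB g → costZ c fB ≤ costZ c g) →
      (∀ e, 0 ≤ fB e ∧ fB e ≤ (u e : ℝ)) ∧ Fstar ≤ costZ c fB ∧
        costZ c fB ≤ (1 - 2 / (m : ℝ) ^ 8) * Fstar := by
  intro q M uB fB hfB hopt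
  obtain ⟨f, hf, rfl⟩ := hex
  have hm1 : (1 : ℝ) ≤ m := by exact_mod_cast one_le_two.trans hm
  have hm0 : (0 : ℝ) < m := one_pos.trans_le hm1
  have hT : -costZ c f ≤ B * (m : ℝ) ^ 20 := calc
    -costZ c f ≤ B * (m : ℝ) ^ 12 := by linarith
    _ ≤ B * (m : ℝ) ^ 20 := by gcongr; norm_num
  have hc1 : ((∑ e, |c e| : ℤ) : ℝ) ≤ m * m ^ 10 := by
    exact_mod_cast (sum_le_card_nsmul _ _ _ fun e _ ↦ hc e).trans_eq (by simp [hmcard])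
  obtain ⟨hfeas, hle, hcost⟩ :=
    stmt16_general hf hmin (Int.ceil_pos.2 (by positivity)) hT hfB hopt
  rw [← hmcard] at hcost
  exact ⟨hfeas.1, hle, hcost.trans (add_mul_ceil_sub_one_le hm0 hB hFB hc1)⟩
end
end

section
/- (Self-concordance of the partially minimized exponential barrier.) Let X ⊆ ℝ² be open and ψ : X → ℝ three times continuously differentiable with ψ ≥ 0 on X, and suppose for some ν ≥ 1 that for all (x,y) ∈ X and all w ∈ ℝ²: |∇³ψ(x,y)[w,w,w]| ≤ 2·(w^⊤∇²ψ(x,y)w)^{3/2} and ⟨∇ψ(x,y), w⟩² ≤ ν·w^⊤∇²ψ(x,y)w (in particular ∇²ψ is positive semidefinite). Let α ∈ (0, 1/(1000ν)], t ∈ ℝ, let I ⊆ ℝ be open, and let y : I → ℝ be twice continuously differentiable with (x, y(x)) ∈ X for all x ∈ I and with y(x) a critical point of the map y ↦ t·y + exp(α·ψ(x,y)) for every x ∈ I, i.e. t + α·ψ_y(x,y(x))·exp(α·ψ(x,y(x))) = 0. Define ζ(x) := t·y(x) + exp(α·ψ(x, y(x))). Then for all x ∈ I: ζ″(x) ≥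 0 and α^{−1}·|ζ‴(x)| ≤ 4·(α^{−1}·ζ″(x))^{3/2}; equivalently, the function 4·α^{−1}·ζ is self-concordant on I. -/
noncomputable section

/-! Put `f z = L z + exp (α ψ z)`. Along a curve of points `(x, y x)` that are critical in `y`, the
first three derivatives of `f (x, y x)` are `Df (1, 0)`, `D²f [w, w]` and `D³f [w, w, w]` with
`w = (1, y' x)`: the terms carrying `y''` vanish, by the criticality condition and its derivative
in `x`. So partial minimization loses nothing, and it is enough to bound `D³f` by `D²f` pointwise.
With `E = exp (α ψ)`, `a = Dψ w`, `b = D²ψ [w, w]` and `c = D³ψ [w, w, w]`, these are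
`D²f = α E (α a² + b)` and `D³f = α E (α² a³ + 3 α a b + c)`. Self-concordance of `ψ` bounds `c`,
and `E ≥ 1` gives `E ≤ E ^ (3/2)`. The mixed terms are handled by
`2 (A + B)³ - A (A + 3 B)² = (A - B)² (A + 2 B) ≥ 0` for `A = α a²` and `B = b`. -/

section ScalarInequalities

lemma mul_sq_add_three_mul_le {A B : ℝ} (hA : 0 ≤ A) (hB : 0 ≤ B) :
    A * (A + 3 * B) ^ 2 ≤ 2 * (A + B) ^ 3 := by
  have gap_nonneg : 0 ≤ (A - B) ^ 2 * (A + 2 * B) := by positivity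
  linear_combination gap_nonneg

lemma sqrt_pow_three {r : ℝ} (hr : 0 ≤ r) : √(r ^ 3) = r ^ ((3 : ℝ) / 2) := by
  rw [Real.sqrt_eq_rpow, ← Real.rpow_natCast, ← Real.rpow_mul hr]
  norm_num

lemma abs_cube_add_three_mul_le {α b : ℝ} (hα : 0 ≤ α) (hb : 0 ≤ b) (a : ℝ) :
    |α ^ 2 * a ^ 3 + 3 * α * a * b| ≤ √(2 * α) * (α * a ^ 2 + b) ^ ((3 : ℝ) / 2) := by
  rw [← sqrt_pow_three (by positivity), ← Real.sqrt_mul (by positivity)]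
  refine Real.abs_le_sqrt ?_
  calc (α ^ 2 * a ^ 3 + 3 * α * a * b) ^ 2
      = α * (α * a ^ 2 * (α * a ^ 2 + 3 * b) ^ 2) := by ring
    _ ≤ α * (2 * (α * a ^ 2 + b) ^ 3) :=
        mul_le_mul_of_nonneg_left (mul_sq_add_three_mul_le (by positivity) hb) hα
    _ = 2 * α * (α * a ^ 2 + b) ^ 3 := by ring

lemma abs_exp_third_deriv_le {α b c : ℝ} (hα : 0 ≤ α) (hb : 0 ≤ b)
    (hc : |c| ≤ 2 * b ^ ((3 : ℝ) / 2)) (a : ℝ) :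
    |α ^ 2 * a ^ 3 + 3 * α * a * b + c|
      ≤ (2 + √(2 * α)) * (α * a ^ 2 + b) ^ ((3 : ℝ) / 2) := by
  have b_le : b ≤ α * a ^ 2 + b := le_add_of_nonneg_left (by positivity)
  calc |α ^ 2 * a ^ 3 + 3 * α * a * b + c|
      ≤ |α ^ 2 * a ^ 3 + 3 * α * a * b| + |c| := abs_add_le _ _
    _ ≤ √(2 * α) * (α * a ^ 2 + b) ^ ((3 : ℝ) / 2) + 2 * (α * a ^ 2 + b) ^ ((3 : ℝ) / 2) :=
        add_le_add (abs_cube_add_three_mul_le hα hb a) (hc.trans (by gcongr))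
    _ = (2 + √(2 * α)) * (α * a ^ 2 + b) ^ ((3 : ℝ) / 2) := by ring

lemma mul_rpow_le_rpow_mul {E r p : ℝ} (hE : 1 ≤ E) (hr : 0 ≤ r) (hp : 1 ≤ p) :
    E * r ^ p ≤ (E * r) ^ p := by
  rw [Real.mul_rpow (zero_le_one.trans hE) hr]
  gcongr
  exact Real.self_le_rpow_of_one_le hE hp

lemma two_add_sqrt_two_mul_le_four {α ν : ℝ} (hν : 1 ≤ ν) (hα : α ≤ 1 / (1000 * ν)) :
    2 + √(2 * α) ≤ 4 := by
  have α_le_two : α ≤ 2 := hα.trans ((div_le_iff₀ (by positivity)).2 (by linarith))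
  have sqrt_le_two : √(2 * α) ≤ 2 := Real.sqrt_le_iff.2 ⟨by norm_num, by linarith⟩
  linarith

end ScalarInequalities

section HigherDerivatives

variable {V W G : Type*} [NormedAddCommGroup V] [NormedSpace ℝ V]
  [NormedAddCommGroup W] [NormedSpace ℝ W]
  [NormedAddCommGroup G] [NormedSpace ℝ G]

lemma iteratedFDeriv_three_apply (f : V → G) (p : V) (m : Fin 3 → V) :
    iteratedFDeriv ℝ 3 f p m = fderiv ℝ (fderiv ℝ (fderiv ℝ f)) p (m 0) (m 1) (m 2) := by
  rw [iteratedFDeriv_succ_apply_right, iteratedFDeriv_two_apply]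
  rfl

variable {f : V → G} {p : V}

lemma differentiableAt_fderiv (hf : ContDiffAt ℝ 2 f p) : DifferentiableAt ℝ (fderiv ℝ f) p :=
  (hf.fderiv_right (m := 1) (by norm_num)).differentiableAt one_ne_zero

lemma differentiableAt_fderiv_fderiv (hf : ContDiffAt ℝ 3 f p) :
    DifferentiableAt ℝ (fderiv ℝ (fderiv ℝ f)) p :=
  differentiableAt_fderiv (hf.fderiv_right (by norm_num))

lemma hasFDerivAt_apply_const {A : V → W →L[ℝ] G} {A' : V →L[ℝ] W →L[ℝ] G}
    (hA : HasFDerivAt A A' p) (w : W) : HasFDerivAt (fun q => A q w) (A'.flip w) p :=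
  (hA.clm_apply (hasFDerivAt_const w p)).congr_fderiv (by simp)

end HigherDerivatives

section ExpBarrier

variable {V : Type*} [NormedAddCommGroup V] [NormedSpace ℝ V]

/-- Self-concordance of `ψ` on `X`: the Hessian is positive semidefinite and controls the third
derivative along every direction. Nonnegativity of the Hessian has to be a separate clause, as
`Real.rpow` gives a negative base the power `0` for the exponent `3 / 2`. -/
def IsSelfConcordantOn (ψ : V → ℝ) (X : Set V) : Prop :=
  ∀ p ∈ X, ∀ w, 0 ≤ iteratedFDeriv ℝ 2 ψ p ![w, w] ∧
    |iteratedFDeriv ℝ 3 ψ p ![w, w, w]| ≤ 2 * (iteratedFDeriv ℝ 2 ψ p ![w, w]) ^ ((3 : ℝ) / 2)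

lemma isSelfConcordantOn_of_gradient_bound {ψ : V → ℝ} {X : Set V} {ν : ℝ} (hν : 0 < ν)
    (h : ∀ p ∈ X, ∀ w,
      |iteratedFDeriv ℝ 3 ψ p ![w, w, w]|
          ≤ 2 * (iteratedFDeriv ℝ 2 ψ p ![w, w]) ^ ((3 : ℝ) / 2) ∧
        (fderiv ℝ ψ p w) ^ 2 ≤ ν * iteratedFDeriv ℝ 2 ψ p ![w, w]) :
    IsSelfConcordantOn ψ X := fun p hp w =>
  ⟨nonneg_of_mul_nonneg_right ((sq_nonneg _).trans (h p hp w).2) hν, (h p hp w).1⟩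

/-- The linear objective `L` regularized by the exponential barrier `exp (α ψ)`; this is the
function to be partially minimized. -/
def expBarrier (L : V →L[ℝ] ℝ) (α : ℝ) (ψ : V → ℝ) (p : V) : ℝ :=
  L p + Real.exp (α * ψ p)

variable {L : V →L[ℝ] ℝ} {α : ℝ} {ψ : V → ℝ} {p : V}

lemma contDiffAt_expBarrier {n : WithTop ℕ∞} (hψ : ContDiffAt ℝ n ψ p) :
    ContDiffAt ℝ n (expBarrier L α ψ) p :=
  L.contDiff.contDiffAt.add (contDiffAt_const.mul hψ).exp

lemma hasFDerivAt_const_mul_exp (hψ : DifferentiableAt ℝ ψ p) :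
    HasFDerivAt (fun q => α * Real.exp (α * ψ q))
      ((α ^ 2 * Real.exp (α * ψ p)) • fderiv ℝ ψ p) p := by
  refine ((hψ.hasFDerivAt.const_mul α).exp.const_mul α).congr_fderiv ?_
  simp only [smul_smul]
  ring_nf

lemma fderiv_expBarrier (hψ : DifferentiableAt ℝ ψ p) :
    fderiv ℝ (expBarrier L α ψ) p = L + (α * Real.exp (α * ψ p)) • fderiv ℝ ψ p := by
  refine (L.hasFDerivAt.add (hψ.hasFDerivAt.const_mul α).exp).fderiv.trans ?_
  rw [smul_smul, mul_comm]

lemma fderiv_fderiv_expBarrier (hψ : ContDiffAt ℝ 2 ψ p) (w : V) :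
    fderiv ℝ (fderiv ℝ (expBarrier L α ψ)) p w w =
      α * Real.exp (α * ψ p) * (α * (fderiv ℝ ψ p w) ^ 2 + fderiv ℝ (fderiv ℝ ψ) p w w) := by
  have fderiv_eq : fderiv ℝ (expBarrier L α ψ) =ᶠ[nhds p]
      fun q => L + (α * Real.exp (α * ψ q)) • fderiv ℝ ψ q :=
    (hψ.eventually (by simp)).mono fun q hq => fderiv_expBarrier (hq.differentiableAt two_ne_zero)
  have formula_deriv := ((hasFDerivAt_const_mul_exp (α := α) (hψ.differentiableAt two_ne_zero)).smul
    (differentiableAt_fderiv hψ).hasFDerivAt).const_add L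
  rw [(formula_deriv.congr_of_eventuallyEq fderiv_eq).fderiv]
  simp only [add_apply, smul_apply, ContinuousLinearMap.smulRight_apply, smul_eq_mul]
  ring

lemma fderiv_fderiv_fderiv_expBarrier (hψ : ContDiffAt ℝ 3 ψ p) (w : V) :
    fderiv ℝ (fderiv ℝ (fderiv ℝ (expBarrier L α ψ))) p w w w =
      α * Real.exp (α * ψ p) * (α ^ 2 * (fderiv ℝ ψ p w) ^ 3
        + 3 * α * fderiv ℝ ψ p w * fderiv ℝ (fderiv ℝ ψ) p w w
        + fderiv ℝ (fderiv ℝ (fderiv ℝ ψ)) p w w w) := by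
  have second_eq : (fun q => fderiv ℝ (fderiv ℝ (expBarrier L α ψ)) q w w) =ᶠ[nhds p]
      fun q => α * Real.exp (α * ψ q) *
        (α * (fderiv ℝ ψ q w) ^ 2 + fderiv ℝ (fderiv ℝ ψ) q w w) :=
    (hψ.eventually (by simp)).mono fun q hq =>
      fderiv_fderiv_expBarrier (hq.of_le (by norm_num)) w
  have gradient_deriv := hasFDerivAt_apply_const
    (differentiableAt_fderiv (hψ.of_le (by norm_num))).hasFDerivAt w
  have hessian_deriv := hasFDerivAt_apply_const (hasFDerivAt_apply_const
    (differentiableAt_fderiv_fderiv hψ).hasFDerivAt w) w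
  have formula_deriv := (hasFDerivAt_const_mul_exp (α := α) (hψ.differentiableAt three_ne_zero)).mul
    (((gradient_deriv.pow 2).const_mul α).add hessian_deriv)
  have third := hasFDerivAt_apply_const (hasFDerivAt_apply_const (differentiableAt_fderiv_fderiv
    (contDiffAt_expBarrier (L := L) (α := α) hψ)).hasFDerivAt w) w
  have third_eq := DFunLike.congr_fun (third.unique
    (formula_deriv.congr_of_eventuallyEq second_eq)) w
  simp only [Nat.add_one_sub_one, pow_one, nsmul_eq_mul, Nat.cast_ofNat, smul_add, Pi.add_apply,
    add_apply, smul_apply, ContinuousLinearMap.flip_apply, smul_eq_mul] at third_eq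
  linear_combination third_eq

lemma expBarrier_self_concordance_bound {X : Set V} (hψ : ContDiffAt ℝ 3 ψ p)
    (hsc : IsSelfConcordantOn ψ X) (hp : p ∈ X) (hψ0 : 0 ≤ ψ p) (hα : 0 < α) (w : V) :
    0 ≤ fderiv ℝ (fderiv ℝ (expBarrier L α ψ)) p w w ∧
      α⁻¹ * |fderiv ℝ (fderiv ℝ (fderiv ℝ (expBarrier L α ψ))) p w w w|
        ≤ (2 + √(2 * α)) *
          (α⁻¹ * fderiv ℝ (fderiv ℝ (expBarrier L α ψ)) p w w) ^ ((3 : ℝ) / 2) := by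
  obtain ⟨hb, hc⟩ := hsc p hp w
  simp only [iteratedFDeriv_two_apply, iteratedFDeriv_three_apply, Matrix.cons_val] at hb hc
  rw [fderiv_fderiv_expBarrier (hψ.of_le (by norm_num)), fderiv_fderiv_fderiv_expBarrier hψ]
  set E := Real.exp (α * ψ p)
  set a := fderiv ℝ ψ p w
  set b := fderiv ℝ (fderiv ℝ ψ) p w w
  set c := fderiv ℝ (fderiv ℝ (fderiv ℝ ψ)) p w w w
  have hE : 1 ≤ E := Real.one_le_exp (by positivity)
  refine ⟨by positivity, ?_⟩
  calc α⁻¹ * |α * E * (α ^ 2 * a ^ 3 + 3 * α * a * b + c)|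
      = E * |α ^ 2 * a ^ 3 + 3 * α * a * b + c| := by
        rw [abs_mul, abs_of_pos (by positivity), mul_assoc, inv_mul_cancel_left₀ hα.ne']
    _ ≤ E * ((2 + √(2 * α)) * (α * a ^ 2 + b) ^ ((3 : ℝ) / 2)) := by
        gcongr
        exact abs_exp_third_deriv_le hα.le hb hc a
    _ = (2 + √(2 * α)) * (E * (α * a ^ 2 + b) ^ ((3 : ℝ) / 2)) := mul_left_comm _ _ _
    _ ≤ (2 + √(2 * α)) * (E * (α * a ^ 2 + b)) ^ ((3 : ℝ) / 2) := by
        gcongr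
        exact mul_rpow_le_rpow_mul hE (by positivity) (by norm_num)
    _ = (2 + √(2 * α)) * (α⁻¹ * (α * E * (α * a ^ 2 + b))) ^ ((3 : ℝ) / 2) := by
        rw [mul_assoc α, inv_mul_cancel_left₀ hα.ne']

end ExpBarrier

section CriticalGraph

variable {F G : Type*} [NormedAddCommGroup F] [NormedSpace ℝ F]
  [NormedAddCommGroup G] [NormedSpace ℝ G]
  {f : ℝ × F → G} {y : ℝ → F} {I : Set ℝ} {x : ℝ}

lemma apply_zero_prod_of_comp_inr_eq_zero {A : ℝ × F →L[ℝ] G} (hA : A ∘L .inr ℝ ℝ F = 0) (v : F) :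
    A (0, v) = 0 :=
  DFunLike.congr_fun hA v

lemma apply_prod_of_comp_inr_eq_zero {A : ℝ × F →L[ℝ] G} (hA : A ∘L .inr ℝ ℝ F = 0)
    (u : ℝ) (v : F) : A (u, v) = A (u, 0) := by
  rw [← Prod.fst_add_snd (u, v), map_add, apply_zero_prod_of_comp_inr_eq_zero hA, add_zero]

lemma hasDerivAt_comp_graph (hf : DifferentiableAt ℝ f (x, y x)) (hy : DifferentiableAt ℝ y x) :
    HasDerivAt (fun s => f (s, y s)) (fderiv ℝ f (x, y x) (1, deriv y x)) x :=
  hf.hasFDerivAt.comp_hasDerivAt (f := fun s => (s, y s)) x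
    ((hasDerivAt_id x).prodMk hy.hasDerivAt)

lemma deriv_comp_graph_of_critical (hf : DifferentiableAt ℝ f (x, y x))
    (hy : DifferentiableAt ℝ y x) (hcrit : fderiv ℝ f (x, y x) ∘L .inr ℝ ℝ F = 0) :
    deriv (fun s => f (s, y s)) x = fderiv ℝ f (x, y x) (1, 0) := by
  rw [(hasDerivAt_comp_graph hf hy).deriv, apply_prod_of_comp_inr_eq_zero hcrit]

lemma fderiv_fderiv_comp_inr_of_critical (hI : IsOpen I) (hx : x ∈ I)
    (hf : ContDiffAt ℝ 2 f (x, y x)) (hy : DifferentiableAt ℝ y x)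
    (hcrit : ∀ s ∈ I, fderiv ℝ f (s, y s) ∘L .inr ℝ ℝ F = 0) :
    fderiv ℝ (fderiv ℝ f) (x, y x) (1, deriv y x) ∘L .inr ℝ ℝ F = 0 := by
  have partial_deriv := (hasDerivAt_comp_graph (differentiableAt_fderiv hf) hy).clm_comp
    (hasDerivAt_const x (ContinuousLinearMap.inr ℝ ℝ F))
  have partial_eq_zero : (fun s => fderiv ℝ f (s, y s) ∘L .inr ℝ ℝ F) =ᶠ[nhds x] fun _ => 0 :=
    (hI.eventually_mem hx).mono hcrit
  simpa using partial_deriv.unique ((hasDerivAt_const x 0).congr_of_eventuallyEq partial_eq_zero)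

lemma deriv_deriv_comp_graph_of_critical (hI : IsOpen I) (hx : x ∈ I)
    (hf : ∀ s ∈ I, ContDiffAt ℝ 2 f (s, y s)) (hy : ∀ s ∈ I, DifferentiableAt ℝ y s)
    (hcrit : ∀ s ∈ I, fderiv ℝ f (s, y s) ∘L .inr ℝ ℝ F = 0) :
    deriv (deriv fun s => f (s, y s)) x =
      fderiv ℝ (fderiv ℝ f) (x, y x) (1, deriv y x) (1, deriv y x) := by
  have deriv_eq : deriv (fun s => f (s, y s)) =ᶠ[nhds x] fun s => fderiv ℝ f (s, y s) (1, 0) :=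
    (hI.eventually_mem hx).mono fun s hs =>
      deriv_comp_graph_of_critical ((hf s hs).differentiableAt two_ne_zero) (hy s hs) (hcrit s hs)
  have deriv_partial := (hasDerivAt_comp_graph (differentiableAt_fderiv (hf x hx))
    (hy x hx)).clm_apply (hasDerivAt_const x ((1 : ℝ), (0 : F)))
  rw [deriv_eq.deriv_eq, deriv_partial.deriv, map_zero, add_zero, apply_prod_of_comp_inr_eq_zero
    (fderiv_fderiv_comp_inr_of_critical hI hx (hf x hx) (hy x hx) hcrit) 1 (deriv y x)]

lemma deriv_deriv_deriv_comp_graph_of_critical (hI : IsOpen I) (hx : x ∈ I)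
    (hf : ∀ s ∈ I, ContDiffAt ℝ 3 f (s, y s)) (hy : ContDiffOn ℝ 2 y I)
    (hcrit : ∀ s ∈ I, fderiv ℝ f (s, y s) ∘L .inr ℝ ℝ F = 0) :
    deriv (deriv (deriv fun s => f (s, y s))) x =
      fderiv ℝ (fderiv ℝ (fderiv ℝ f)) (x, y x)
        (1, deriv y x) (1, deriv y x) (1, deriv y x) := by
  have hf₂ : ∀ s ∈ I, ContDiffAt ℝ 2 f (s, y s) := fun s hs => (hf s hs).of_le (by norm_num)
  have hy₁ : ∀ s ∈ I, DifferentiableAt ℝ y s := fun s hs =>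
    (hy.contDiffAt (hI.mem_nhds hs)).differentiableAt two_ne_zero
  have hy₂ : DifferentiableAt ℝ (deriv y) x :=
    ((hy.deriv_of_isOpen hI (m := 1) (by norm_num)).contDiffAt
      (hI.mem_nhds hx)).differentiableAt one_ne_zero
  have second_eq : deriv (deriv fun s => f (s, y s)) =ᶠ[nhds x]
      fun s => fderiv ℝ (fderiv ℝ f) (s, y s) (1, deriv y s) (1, deriv y s) :=
    (hI.eventually_mem hx).mono fun s hs =>
      deriv_deriv_comp_graph_of_critical hI hs hf₂ hy₁ hcrit
  have tangent_deriv := (hasDerivAt_const x (1 : ℝ)).prodMk hy₂.hasDerivAt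
  have hessian_deriv := hasDerivAt_comp_graph (f := fderiv ℝ (fderiv ℝ f))
    (differentiableAt_fderiv_fderiv (hf x hx)) (hy₁ x hx)
  have third := (hessian_deriv.clm_apply tangent_deriv).clm_apply tangent_deriv
  have tangent_vertical : fderiv ℝ (fderiv ℝ f) (x, y x) (1, deriv y x)
      (0, deriv (deriv y) x) = 0 := apply_zero_prod_of_comp_inr_eq_zero
    (fderiv_fderiv_comp_inr_of_critical hI hx (hf₂ x hx) (hy₁ x hx) hcrit) _
  have vertical_tangent : fderiv ℝ (fderiv ℝ f) (x, y x) (0, deriv (deriv y) x)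
      (1, deriv y x) = 0 :=
    ((hf₂ x hx).isSymmSndFDerivAt (by simp) _ _).trans tangent_vertical
  rw [second_eq.deriv_eq, third.deriv]
  simp only [add_apply, tangent_vertical, vertical_tangent, add_zero]

end CriticalGraph

theorem stmt18_general {F : Type*} [NormedAddCommGroup F] [NormedSpace ℝ F]
    {X : Set (ℝ × F)} (hX : IsOpen X) {ψ : ℝ × F → ℝ} (hψ : ContDiffOn ℝ 3 ψ X)
    (hψ0 : ∀ p ∈ X, 0 ≤ ψ p) (hsc : IsSelfConcordantOn ψ X)
    (L : ℝ × F →L[ℝ] ℝ) {α C : ℝ} (hα : 0 < α) (hC : 2 + √(2 * α) ≤ C)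
    {I : Set ℝ} (hI : IsOpen I) {y : ℝ → F} (hy : ContDiffOn ℝ 2 y I)
    (hmem : ∀ x ∈ I, (x, y x) ∈ X)
    (hcrit : ∀ x ∈ I,
      (L + (α * Real.exp (α * ψ (x, y x))) • fderiv ℝ ψ (x, y x)) ∘L .inr ℝ ℝ F = 0) :
    ∀ x ∈ I,
      0 ≤ deriv (deriv fun s => expBarrier L α ψ (s, y s)) x ∧
        α⁻¹ * |deriv (deriv (deriv fun s => expBarrier L α ψ (s, y s))) x|
          ≤ C * (α⁻¹ * deriv (deriv fun s => expBarrier L α ψ (s, y s)) x)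
              ^ ((3 : ℝ) / 2) := by
  intro x hx
  have hψ₃ : ∀ s ∈ I, ContDiffAt ℝ 3 ψ (s, y s) := fun s hs =>
    hψ.contDiffAt (hX.mem_nhds (hmem s hs))
  have hf₃ : ∀ s ∈ I, ContDiffAt ℝ 3 (expBarrier L α ψ) (s, y s) := fun s hs =>
    contDiffAt_expBarrier (hψ₃ s hs)
  have hf_crit : ∀ s ∈ I, fderiv ℝ (expBarrier L α ψ) (s, y s) ∘L .inr ℝ ℝ F = 0 := fun s hs => by
    rw [fderiv_expBarrier ((hψ₃ s hs).differentiableAt three_ne_zero), hcrit s hs]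
  rw [deriv_deriv_deriv_comp_graph_of_critical hI hx hf₃ hy hf_crit,
    deriv_deriv_comp_graph_of_critical hI hx (fun s hs => (hf₃ s hs).of_le (by norm_num))
      (fun s hs => (hy.contDiffAt (hI.mem_nhds hs)).differentiableAt two_ne_zero) hf_crit]
  obtain ⟨second_nonneg, third_le⟩ := expBarrier_self_concordance_bound (L := L) (hψ₃ x hx) hsc
    (hmem x hx) (hψ0 _ (hmem x hx)) hα (1, deriv y x)
  exact ⟨second_nonneg, third_le.trans (by gcongr)⟩

/-- self-concordance of the partially minimized exponential barrier:
if `ψ ≥ 0` is `C³`, `ν`-self-concordant on the open set `X` (third-derivative bound and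
gradient bound), `α ∈ (0, 1/(1000ν)]`, and `y x` is a critical point of
`y ↦ t y + exp(α ψ(x, y))` for each `x ∈ I`, then
`ζ x = t·y x + exp(α ψ(x, y x))` satisfies `ζ'' ≥ 0` and
`α⁻¹ |ζ'''| ≤ 4 (α⁻¹ ζ'')^{3/2}` on `I`; i.e. `4 α⁻¹ ζ` is self-concordant on `I`. -/
theorem stmt18
    (X : Set (ℝ × ℝ)) (hX : IsOpen X)
    (ψ : ℝ × ℝ → ℝ) (hψ : ContDiffOn ℝ 3 ψ X)
    (hψ0 : ∀ p ∈ X, 0 ≤ ψ p)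
    (ν : ℝ) (hν : 1 ≤ ν)
    (hsc : ∀ p ∈ X, ∀ w : ℝ × ℝ,
      |iteratedFDeriv ℝ 3 ψ p ![w, w, w]|
          ≤ 2 * (iteratedFDeriv ℝ 2 ψ p ![w, w]) ^ ((3 : ℝ) / 2) ∧
        (fderiv ℝ ψ p w) ^ 2 ≤ ν * iteratedFDeriv ℝ 2 ψ p ![w, w])
    (α t : ℝ) (hα : 0 < α ∧ α ≤ 1 / (1000 * ν))
    (I : Set ℝ) (hI : IsOpen I)
    (y : ℝ → ℝ) (hy : ContDiffOn ℝ 2 y I)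
    (hmem : ∀ x ∈ I, (x, y x) ∈ X)
    (hcrit : ∀ x ∈ I,
      t + α * fderiv ℝ ψ (x, y x) (0, 1) * Real.exp (α * ψ (x, y x)) = 0) :
    ∀ x ∈ I,
      0 ≤ deriv (deriv fun s => t * y s + Real.exp (α * ψ (s, y s))) x ∧
        α⁻¹ * |deriv (deriv (deriv fun s => t * y s + Real.exp (α * ψ (s, y s)))) x|
          ≤ 4 * (α⁻¹ * deriv (deriv fun s => t * y s + Real.exp (α * ψ (s, y s))) x)
              ^ ((3 : ℝ) / 2) := by
  exact stmt18_general hX hψ hψ0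
    (isSelfConcordantOn_of_gradient_bound (zero_lt_one.trans_le hν) hsc)
    (t • .snd ℝ ℝ ℝ) hα.1 (two_add_sqrt_two_mul_le_four hν hα.2) hI hy hmem fun x hx =>
      ContinuousLinearMap.ext_ring (by simpa [mul_right_comm] using hcrit x hx)
end
end
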